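/- Let Φ be a max-G decision rule with G the Gini gain, and let T be ε-approximate w.r.t. (S, Φ). Then every internal vertex v of T satisfies GiniGain(S(T,v), σ_v) ≥ max_{σ ∈ 𝒮} GiniGain(S(T,v), σ) − 96ε, where σ_v is the split rule at v. -/

import Mathlib

/-- Edit distance (symmetric difference size) of two multisets. -/
def symmDist {α : Type} [DecidableEq α] (S S' : Multiset α) : ℕ :=
  (S - S').card + (S' - S).card

/-- Relative edit distance `ED*(S,S') = △(S,S') / max(|S|,|S'|)`. -/
noncomputable def edStar {α : Type} [DecidableEq α] (S S' : Multiset α) : ℝ :=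
  (symmDist S S' : ℝ) / ((max S.card S'.card : ℕ) : ℝ)

/-- Gini impurity of a multiset of labeled examples, labels given by `lab : α → Fin k`. -/
noncomputable def giniImp {α : Type} {k : ℕ} (lab : α → Fin k) (S : Multiset α) : ℝ :=
  1 - ∑ i : Fin k, (((S.filter fun x => lab x = i).card : ℝ) / (S.card : ℝ)) ^ 2

/-- Gini gain of a split rule `σ` on `S`. -/
noncomputable def giniGain {α : Type} {k : ℕ} (lab : α → Fin k) (σ : α → Bool)
    (S : Multiset α) : ℝ :=
  giniImp lab S
    - ((S.filter fun x => σ x = false).card : ℝ) / (S.card : ℝ) *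
        giniImp lab (S.filter fun x => σ x = false)
    - ((S.filter fun x => σ x = true).card : ℝ) / (S.card : ℝ) *
        giniImp lab (S.filter fun x => σ x = true)

/-- Binary decision trees: each internal vertex carries a split rule `α → Bool`. -/
inductive DTree (α : Type) where
  | leaf : DTree α
  | node : (α → Bool) → DTree α → DTree α → DTree α

/-- `Occurs T S t A` says that `t` is a subtree (vertex) of `T` and `A = S(T,v)` is
the submultiset of `S` reaching it. -/
inductive Occurs {α : Type} : DTree α → Multiset α → DTree α → Multiset α → Prop
  | refl (t : DTree α) (S : Multiset α) : Occurs t S t S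
  | left {t : DTree α} {S : Multiset α} {σ : α → Bool} {t0 t1 : DTree α}
      {A : Multiset α} : Occurs t S (DTree.node σ t0 t1) A →
      Occurs t S t0 (A.filter fun x => σ x = false)
  | right {t : DTree α} {S : Multiset α} {σ : α → Bool} {t0 t1 : DTree α}
      {A : Multiset α} : Occurs t S (DTree.node σ t0 t1) A →
      Occurs t S t1 (A.filter fun x => σ x = true)

/-- `T` is `ε`-approximate w.r.t. `(S,Φ)`: the decision (split rule or leaf) at each
vertex `v` equals `Φ(S_v)` for some multiset `S_v` with `ED*(S(T,v),S_v) ≤ ε`. -/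
def EpsApproxOn {α : Type} [DecidableEq α] (Φ : Multiset α → Option (α → Bool))
    (ε : ℝ) : DTree α → Multiset α → Prop
  | DTree.leaf, S => ∃ Sv : Multiset α, edStar S Sv ≤ ε ∧ Φ Sv = none
  | DTree.node σ t0 t1, S =>
      (∃ Sv : Multiset α, edStar S Sv ≤ ε ∧ Φ Sv = some σ) ∧
      EpsApproxOn Φ ε t0 (S.filter fun x => σ x = false) ∧
      EpsApproxOn Φ ε t1 (S.filter fun x => σ x = true)

theorem occurs_approx {α : Type} [DecidableEq α] {Φ : Multiset α → Option (α → Bool)} {ε : ℝ}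
    {T t : DTree α} {S A : Multiset α} (h : Occurs T S t A) (happ : EpsApproxOn Φ ε T S) :
    EpsApproxOn Φ ε t A := by
  induction h with
  | refl => exact happ
  | left _ ih => exact ih.2.1
  | right _ ih => exact ih.2.2

noncomputable def cnt {α : Type} {k : ℕ} (lab : α → Fin k) (S : Multiset α) (i : Fin k) : ℝ :=
  ((S.filter fun x => lab x = i).card : ℝ)

noncomputable def sqSum {α : Type} {k : ℕ} (lab : α → Fin k) (S : Multiset α) : ℝ :=
  ∑ i : Fin k, cnt lab S i ^ 2

noncomputable def potF {α : Type} {k : ℕ} (lab : α → Fin k) (S : Multiset α) : ℝ :=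
  sqSum lab S / (S.card : ℝ)

noncomputable def potH {α : Type} {k : ℕ} (lab : α → Fin k) (σ : α → Bool) (S : Multiset α) : ℝ :=
  potF lab (S.filter fun x => σ x = false) + potF lab (S.filter fun x => σ x = true) - potF lab S

theorem cnt_cons {α : Type} {k : ℕ} (lab : α → Fin k) (x : α) (S : Multiset α) (i : Fin k) :
    cnt lab (x ::ₘ S) i = cnt lab S i + if lab x = i then 1 else 0 := by
  unfold cnt
  by_cases h : lab x = i <;> simp [h]

theorem cnt_nonneg {α : Type} {k : ℕ} (lab : α → Fin k) (S : Multiset α) (i : Fin k) :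
    0 ≤ cnt lab S i := Nat.cast_nonneg _

theorem cnt_le {α : Type} {k : ℕ} (lab : α → Fin k) (S : Multiset α) (i : Fin k) :
    cnt lab S i ≤ S.card := by
  unfold cnt
  exact_mod_cast Multiset.card_le_card (Multiset.filter_le _ S)

theorem sqSum_cons {α : Type} {k : ℕ} (lab : α → Fin k) (x : α) (S : Multiset α) :
    sqSum lab (x ::ₘ S) = sqSum lab S + 2 * cnt lab S (lab x) + 1 := by
  unfold sqSum
  have : ∀ i, cnt lab (x ::ₘ S) i ^ 2 =
      cnt lab S i ^ 2 + if lab x = i then 2 * cnt lab S i + 1 else 0 := by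
    intro i
    rw [cnt_cons]
    split_ifs <;> ring
  simp only [this, Finset.sum_add_distrib, Finset.sum_ite_eq, Finset.mem_univ, if_true]
  ring

theorem sqSum_zero {α : Type} {k : ℕ} (lab : α → Fin k) : sqSum lab (0 : Multiset α) = 0 := by
  simp [sqSum, cnt]

theorem sqSum_nonneg {α : Type} {k : ℕ} (lab : α → Fin k) (S : Multiset α) : 0 ≤ sqSum lab S :=
  Finset.sum_nonneg fun _ _ => sq_nonneg _

theorem sqSum_le {α : Type} {k : ℕ} (lab : α → Fin k) (S : Multiset α) :
    sqSum lab S ≤ (S.card : ℝ) ^ 2 := by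
  induction S using Multiset.induction_on with
  | empty => simp [sqSum_zero]
  | cons x S ih =>
    rw [sqSum_cons, Multiset.card_cons]
    push_cast
    nlinarith [cnt_le lab S (lab x)]

theorem potF_nonneg {α : Type} {k : ℕ} (lab : α → Fin k) (S : Multiset α) : 0 ≤ potF lab S :=
  div_nonneg (sqSum_nonneg _ _) (Nat.cast_nonneg _)

theorem potF_le {α : Type} {k : ℕ} (lab : α → Fin k) (S : Multiset α) :
    potF lab S ≤ S.card := by
  unfold potF
  apply div_le_of_le_mul₀ (Nat.cast_nonneg _) (Nat.cast_nonneg _)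
  have := sqSum_le lab S
  nlinarith

theorem potF_cons {α : Type} {k : ℕ} (lab : α → Fin k) (x : α) (S : Multiset α) :
    |potF lab (x ::ₘ S) - potF lab S| ≤ 2 := by
  rcases eq_or_ne S 0 with rfl | hS
  · unfold potF
    rw [sqSum_cons]
    simp [sqSum_zero, cnt]
  have hN : (0 : ℝ) < S.card := by
    exact_mod_cast Multiset.card_pos.2 hS
  have hc := cnt_le lab S (lab x)
  have hc0 := cnt_nonneg lab S (lab x)
  have hq := sqSum_le lab S
  have hq0 := sqSum_nonneg lab S
  unfold potF
  rw [sqSum_cons, Multiset.card_cons]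
  push_cast
  generalize sqSum lab S = q at *
  generalize cnt lab S (lab x) = c at *
  generalize (S.card : ℝ) = N at *
  have e : (q + 2 * c + 1) / (N + 1) - q / N = (N * (2 * c + 1) - q) / (N * (N + 1)) := by
    field_simp
    ring
  rw [e, abs_le]
  constructor
  · rw [le_div_iff₀ (by positivity)]
    nlinarith
  · rw [div_le_iff₀ (by positivity)]
    nlinarith

theorem potH_cons {α : Type} {k : ℕ} (lab : α → Fin k) (σ : α → Bool) (x : α) (S : Multiset α) :
    |potH lab σ (x ::ₘ S) - potH lab σ S| ≤ 4 := by
  unfold potH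
  have h1 := abs_le.1 (potF_cons lab x S)
  have h2 := abs_le.1 (potF_cons lab x (S.filter fun x => σ x = false))
  have h3 := abs_le.1 (potF_cons lab x (S.filter fun x => σ x = true))
  rw [abs_le]
  cases h : σ x
  · rw [Multiset.filter_cons_of_pos _ (by exact h), Multiset.filter_cons_of_neg _ (by simp [h])]
    constructor <;> linarith
  · rw [Multiset.filter_cons_of_neg _ (by simp [h]), Multiset.filter_cons_of_pos _ (by exact h)]
    constructor <;> linarith

theorem potH_add {α : Type} {k : ℕ} (lab : α → Fin k) (σ : α → Bool) (U S : Multiset α) :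
    |potH lab σ (U + S) - potH lab σ S| ≤ 4 * U.card := by
  induction U using Multiset.induction_on with
  | empty => simp
  | cons x U ih =>
    rw [Multiset.cons_add, Multiset.card_cons]
    have := abs_le.1 (potH_cons lab σ x (U + S))
    have := abs_le.1 ih
    push_cast
    rw [abs_le]
    constructor <;> linarith

theorem potH_lip {α : Type} [DecidableEq α] {k : ℕ} (lab : α → Fin k) (σ : α → Bool)
    (A B : Multiset α) :
    |potH lab σ A - potH lab σ B| ≤ 4 * symmDist A B := by
  have h1 := abs_le.1 (potH_add lab σ (A - B) (A ∩ B))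
  have h2 := abs_le.1 (potH_add lab σ (B - A) (B ∩ A))
  rw [Multiset.sub_add_inter] at h1 h2
  rw [Multiset.inter_comm B A] at h2
  unfold symmDist
  push_cast
  rw [abs_le]
  constructor <;> linarith

theorem card_split {α : Type} (σ : α → Bool) (S : Multiset α) :
    ((S.filter fun x => σ x = false).card : ℝ) + ((S.filter fun x => σ x = true).card : ℝ)
      = S.card := by
  induction S using Multiset.induction_on with
  | empty => simp
  | cons x S ih =>
    cases h : σ x <;> simp [h] <;> linarith

theorem potH_abs {α : Type} {k : ℕ} (lab : α → Fin k) (σ : α → Bool) (S : Multiset α) :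
    |potH lab σ S| ≤ S.card := by
  have h := card_split σ S
  have h1 := potF_le lab (S.filter fun x => σ x = false)
  have h2 := potF_le lab (S.filter fun x => σ x = true)
  have h3 := potF_le lab S
  have h4 := potF_nonneg lab (S.filter fun x => σ x = false)
  have h5 := potF_nonneg lab (S.filter fun x => σ x = true)
  have h6 := potF_nonneg lab S
  unfold potH
  rw [abs_le]
  constructor <;> linarith

theorem mul_giniImp {α : Type} {k : ℕ} (lab : α → Fin k) (S : Multiset α) :
    (S.card : ℝ) * giniImp lab S = S.card - potF lab S := by
  have e : giniImp lab S = 1 - sqSum lab S / (S.card : ℝ) ^ 2 := by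
    unfold giniImp sqSum cnt
    simp only [div_pow, Finset.sum_div]
  rw [e]
  unfold potF
  rcases eq_or_ne (S.card : ℝ) 0 with h | h
  · simp [h]
  · field_simp

theorem gain_eq {α : Type} {k : ℕ} (lab : α → Fin k) (σ : α → Bool) (S : Multiset α)
    (hS : S ≠ 0) : giniGain lab σ S = potH lab σ S / S.card := by
  have hN : (0 : ℝ) < S.card := by
    exact_mod_cast Multiset.card_pos.2 hS
  rw [eq_div_iff hN.ne']
  have h1 := mul_giniImp lab (S.filter fun x => σ x = false)
  have h2 := mul_giniImp lab (S.filter fun x => σ x = true)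
  have h3 := mul_giniImp lab S
  have h := card_split σ S
  have e : giniGain lab σ S * S.card = S.card * giniImp lab S
    - ((S.filter fun x => σ x = false).card : ℝ) * giniImp lab (S.filter fun x => σ x = false)
    - ((S.filter fun x => σ x = true).card : ℝ) * giniImp lab (S.filter fun x => σ x = true) := by
    unfold giniGain
    field_simp
  rw [e, h1, h2, h3]
  unfold potH
  linarith

theorem card_sub_le {α : Type} [DecidableEq α] (A B : Multiset α) :
    (A.card : ℝ) - B.card ≤ symmDist A B := by
  have h1 := congrArg Multiset.card (Multiset.sub_add_inter A B)
  have h2 : (A ∩ B).card ≤ B.card := Multiset.card_le_card Multiset.inter_le_right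
  rw [Multiset.card_add] at h1
  have : A.card ≤ symmDist A B + B.card := by
    unfold symmDist
    omega
  have : (A.card : ℝ) ≤ symmDist A B + B.card := by exact_mod_cast this
  linarith

theorem edStar_comm {α : Type} [DecidableEq α] (A B : Multiset α) : edStar A B = edStar B A := by
  unfold edStar symmDist
  rw [max_comm, add_comm]

theorem gain_smooth_aux {α : Type} [DecidableEq α] {k : ℕ} (lab : α → Fin k) (σ : α → Bool)
    (A B : Multiset α) (hA : A ≠ 0) (hB : B ≠ 0) (hle : B.card ≤ A.card) :
    |giniGain lab σ A - giniGain lab σ B| ≤ 5 * edStar A B := by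
  have hn : (0 : ℝ) < A.card := by exact_mod_cast Multiset.card_pos.2 hA
  have hm : (0 : ℝ) < B.card := by exact_mod_cast Multiset.card_pos.2 hB
  have hle' : (B.card : ℝ) ≤ A.card := by exact_mod_cast hle
  have hl := potH_lip lab σ A B
  have hb := potH_abs lab σ B
  have hd := card_sub_le A B
  rw [gain_eq lab σ A hA, gain_eq lab σ B hB]
  unfold edStar
  rw [max_eq_left hle]
  generalize (A.card : ℝ) = n at *
  generalize (B.card : ℝ) = m at *
  generalize potH lab σ A = a at *
  generalize potH lab σ B = b at *
  generalize (symmDist A B : ℝ) = d at *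
  have e : a / n - b / m = ((a - b) - (b / m) * (n - m)) / n := by
    field_simp
    ring
  have hbm : |b / m| ≤ 1 := by
    rw [abs_div, abs_of_pos hm]
    exact (div_le_one hm).2 hb
  rw [e, abs_div, abs_of_pos hn, ← mul_div_assoc]
  apply div_le_div_of_nonneg_right _ hn.le
  have h1 : |(b / m) * (n - m)| ≤ d := by
    rw [abs_mul, abs_of_nonneg (sub_nonneg.2 hle')]
    nlinarith [abs_nonneg (b / m)]
  have := abs_sub (a - b) ((b / m) * (n - m))
  linarith

theorem edStar_zero_left {α : Type} [DecidableEq α] (B : Multiset α) (hB : B ≠ 0) :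
    edStar 0 B = 1 := by
  have hm : (B.card : ℝ) ≠ 0 := by exact_mod_cast (Multiset.card_pos.2 hB).ne'
  simp [edStar, symmDist, hm]

theorem gain_smooth {α : Type} [DecidableEq α] {k : ℕ} (lab : α → Fin k) (σ : α → Bool)
    (A B : Multiset α) (h1 : edStar A B < 1) :
    |giniGain lab σ A - giniGain lab σ B| ≤ 48 * edStar A B := by
  have h0 : 0 ≤ edStar A B := by
    unfold edStar
    positivity
  by_cases hA : A = 0
  · by_cases hB : B = 0
    · subst hA hB
      simpa using h0
    · rw [hA, edStar_zero_left B hB] at h1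
      exact absurd h1 (lt_irrefl _)
  by_cases hB : B = 0
  · rw [hB, edStar_comm, edStar_zero_left A hA] at h1
    exact absurd h1 (lt_irrefl _)
  rcases le_total B.card A.card with h | h
  · have := gain_smooth_aux lab σ A B hA hB h
    linarith
  · have := gain_smooth_aux lab σ B A hB hA h
    rw [edStar_comm, abs_sub_comm] at this
    linarith

/-- If `Φ` is a max-Gini-gain decision rule over the family `𝒮` of split rules and
`T` is `ε`-approximate w.r.t. `(S,Φ)`, then at every internal vertex `v` of `T` the
split rule `σ_v` has Gini gain on `S(T,v)` within `96ε` of the maximum over `𝒮`. -/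
theorem stmt17 {α : Type} [DecidableEq α] {k : ℕ} (lab : α → Fin k)
    (𝒮 : Set (α → Bool)) (Φ : Multiset α → Option (α → Bool))
    (ε : ℝ) (hε0 : 0 ≤ ε) (hε1 : ε < 1)
    (hmax : ∀ (A : Multiset α) (σ : α → Bool), Φ A = some σ →
      σ ∈ 𝒮 ∧ ∀ τ ∈ 𝒮, giniGain lab τ A ≤ giniGain lab σ A)
    (T : DTree α) (S : Multiset α) (hS : S ≠ 0)
    (happ : EpsApproxOn Φ ε T S)
    {σ : α → Bool} {t0 t1 : DTree α} {A : Multiset α}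
    (hocc : Occurs T S (DTree.node σ t0 t1) A) :
    ∀ τ ∈ 𝒮, giniGain lab τ A - 96 * ε ≤ giniGain lab σ A := by
  intro τ hτ
  obtain ⟨⟨B, hB, hΦ⟩, -⟩ := occurs_approx hocc happ
  have h1 := abs_le.1 (gain_smooth lab σ A B (lt_of_le_of_lt hB hε1))
  have h2 := abs_le.1 (gain_smooth lab τ A B (lt_of_le_of_lt hB hε1))
  have h3 := (hmax B σ hΦ).2 τ hτ
  linarith [h1.1, h2.2]
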